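/- Let A be a finite type with at least two elements, let n ≥ 3, and let f be any permutation of (Fin n → A). Let F be the permutation of (Fin (n+1) → A) that acts as f on the first n coordinates and leaves the last coordinate unchanged (i.e., F is f ⊕ id₁, the computation of f using one borrowed bit). Then F belongs to the subgroup of Perm(Fin (n+1) → A) generated by the applications, along injections ι : Fin 4 ↪ Fin (n+1), of permutations of (Fin 4 → A). In words: every permutation of Aⁿ can be computed with one borrowed symbol by a circuit built from 4-ary gates. -/

import Mathlib

/-- Extension of an operation on `m`-letter words to `n`-letter words along an
injection of coordinates: apply `F` on the coordinates selected by `ι`, leave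
the rest unchanged. -/
noncomputable def extWord {A : Type*} {m n : ℕ} (ι : Fin m ↪ Fin n)
    (F : (Fin m → A) → (Fin m → A)) (x : Fin n → A) : Fin n → A :=
  fun k => if h : ∃ j, ι j = k then F (x ∘ ι) h.choose else x k

theorem extWord_comp {A : Type*} {m n : ℕ} (ι : Fin m ↪ Fin n)
    (F : (Fin m → A) → (Fin m → A)) (x : Fin n → A) :
    (extWord ι F x) ∘ ι = F (x ∘ ι) := by
  funext j
  have h : ∃ j', ι j' = ι j := ⟨j, rfl⟩
  simp only [Function.comp_apply, extWord, dif_pos h]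
  congr 1
  exact ι.injective h.choose_spec

/-- The application of a gate `f` of arity `m` along an injection `ι : Fin m ↪ Fin n`:
the resulting permutation `g` of words of length `n` satisfies
`(g x) (ι j) = (f (x ∘ ι)) j` for all `j : Fin m`, and `g x k = x k` for every
coordinate `k` outside the range of `ι`. -/
noncomputable def applyAlong {A : Type*} {m n : ℕ} (f : Equiv.Perm (Fin m → A))
    (ι : Fin m ↪ Fin n) : Equiv.Perm (Fin n → A) where
  toFun := extWord ι f
  invFun := extWord ι f.symm
  left_inv x := by
    funext k
    by_cases h : ∃ j, ι j = k
    · obtain ⟨j, rfl⟩ := h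
      have hj : extWord ι (⇑f.symm) (extWord ι (⇑f) x) (ι j)
          = ((extWord ι (⇑f.symm) (extWord ι (⇑f) x)) ∘ ι) j := rfl
      rw [hj, extWord_comp, extWord_comp]
      simp
    · simp only [extWord, dif_neg h]
  right_inv x := by
    funext k
    by_cases h : ∃ j, ι j = k
    · obtain ⟨j, rfl⟩ := h
      have hj : extWord ι (⇑f) (extWord ι (⇑f.symm) x) (ι j)
          = ((extWord ι (⇑f) (extWord ι (⇑f.symm) x)) ∘ ι) j := rfl
      rw [hj, extWord_comp, extWord_comp]
      simp
    · simp only [extWord, dif_neg h]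

theorem applyAlong_comp {A : Type*} {m n : ℕ} (f : Equiv.Perm (Fin m → A))
    (ι : Fin m ↪ Fin n) (x : Fin n → A) : (applyAlong f ι x) ∘ ι = f (x ∘ ι) :=
  extWord_comp ι f x

theorem applyAlong_apply {A : Type*} {m n : ℕ} (f : Equiv.Perm (Fin m → A))
    (ι : Fin m ↪ Fin n) (x : Fin n → A) (j : Fin m) :
    applyAlong f ι x (ι j) = f (x ∘ ι) j :=
  congrFun (applyAlong_comp f ι x) j

theorem applyAlong_of_notMem {A : Type*} {m n : ℕ} (f : Equiv.Perm (Fin m → A))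
    (ι : Fin m ↪ Fin n) (x : Fin n → A) (k : Fin n) (h : ¬ ∃ j, ι j = k) :
    applyAlong f ι x k = x k := by
  change extWord ι f x k = x k
  simp only [extWord, dif_neg h]

theorem applyAlong_mul {A : Type*} {m n : ℕ} (f g : Equiv.Perm (Fin m → A))
    (ι : Fin m ↪ Fin n) : applyAlong (f * g) ι = applyAlong f ι * applyAlong g ι := by
  ext x k
  by_cases h : ∃ j, ι j = k
  · obtain ⟨j, rfl⟩ := h
    rw [Equiv.Perm.mul_apply, applyAlong_apply, applyAlong_apply, applyAlong_comp]
    rfl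
  · rw [Equiv.Perm.mul_apply, applyAlong_of_notMem _ _ _ _ h, applyAlong_of_notMem _ _ _ _ h,
      applyAlong_of_notMem _ _ _ _ h]

theorem applyAlong_trans {A : Type*} {l m n : ℕ} (f : Equiv.Perm (Fin l → A))
    (κ : Fin l ↪ Fin m) (ι : Fin m ↪ Fin n) :
    applyAlong (applyAlong f κ) ι = applyAlong f (κ.trans ι) := by
  ext x k
  by_cases h : ∃ j, ι j = k
  · obtain ⟨j, rfl⟩ := h
    rw [applyAlong_apply]
    by_cases h' : ∃ i, κ i = j
    · obtain ⟨i, rfl⟩ := h'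
      rw [applyAlong_apply]
      exact (applyAlong_apply f (κ.trans ι) x i).symm
    · rw [applyAlong_of_notMem _ _ _ _ h', applyAlong_of_notMem]
      · rfl
      · rintro ⟨i, hi⟩
        exact h' ⟨i, ι.injective hi⟩
  · rw [applyAlong_of_notMem _ _ _ _ h, applyAlong_of_notMem]
    rintro ⟨i, hi⟩
    exact h ⟨κ i, hi⟩

theorem applyAlong_ne_iff {A : Type*} {m n : ℕ} (f : Equiv.Perm (Fin m → A))
    (ι : Fin m ↪ Fin n) (x : Fin n → A) :
    applyAlong f ι x ≠ x ↔ f (x ∘ ι) ≠ x ∘ ι := by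
  rw [not_iff_not]
  constructor
  · intro h
    rw [← applyAlong_comp, h]
  · intro h
    funext k
    by_cases hk : ∃ j, ι j = k
    · obtain ⟨j, rfl⟩ := hk
      rw [applyAlong_apply, h]; rfl
    · exact applyAlong_of_notMem _ _ _ _ hk

/-- `applyAlong` as a group homomorphism. -/
noncomputable def applyHom {A : Type*} {m n : ℕ} (ι : Fin m ↪ Fin n) :
    Equiv.Perm (Fin m → A) →* Equiv.Perm (Fin n → A) :=
  MonoidHom.mk' (fun f => applyAlong f ι) (fun f g => applyAlong_mul f g ι)

/-- The group generated by 4-ary gates. -/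
def gateGroup (A : Type*) (n : ℕ) : Subgroup (Equiv.Perm (Fin n → A)) :=
  Subgroup.closure {σ : Equiv.Perm (Fin n → A) |
        ∃ (g : Equiv.Perm (Fin 4 → A)) (ι : Fin 4 ↪ Fin n), σ = applyAlong g ι}

theorem applyAlong_mem_gateGroup {A : Type*} {m n : ℕ} (ι : Fin m ↪ Fin n)
    {f : Equiv.Perm (Fin m → A)} (hf : f ∈ gateGroup A m) :
    applyAlong f ι ∈ gateGroup A n := by
  have h : gateGroup A m ≤ (gateGroup A n).comap (applyHom ι) := by
    unfold gateGroup
    rw [Subgroup.closure_le]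
    rintro _ ⟨g, κ, rfl⟩
    refine Subgroup.subset_closure ⟨g, κ.trans ι, ?_⟩
    exact applyAlong_trans g κ ι
  exact h hf

theorem perm_app_inv {X : Type*} (s : Equiv.Perm X) (x : X) : s (s⁻¹ x) = x :=
  Equiv.apply_symm_apply s x

theorem perm_inv_app {X : Type*} (s : Equiv.Perm X) (x : X) : s⁻¹ (s x) = x :=
  Equiv.symm_apply_apply s x

theorem commutator_isThreeCycle {X : Type*} [Fintype X] [DecidableEq X]
    (s t : Equiv.Perm X) (p : X) (hs : s p ≠ p) (ht : t p ≠ p)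
    (h : ∀ x, s x ≠ x → t x ≠ x → x = p) :
    (s * t * s⁻¹ * t⁻¹).IsThreeCycle := by
  have hts : t (s p) = s p := by
    by_contra h1
    exact hs (h (s p) (fun h2 => hs (s.injective h2)) h1)
  have hst : s (t p) = t p := by
    by_contra h1
    exact ht (h (t p) h1 (fun h2 => ht (t.injective h2)))
  have hne : s p ≠ t p := by
    intro h1
    rw [h1] at hts
    exact ht (t.injective hts)
  have hti : t (s⁻¹ p) = s⁻¹ p := by
    by_contra h1
    have := h (s⁻¹ p) (by
      intro h2
      rw [perm_app_inv] at h2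
      exact hs (by conv_lhs => rw [h2]
                   exact perm_app_inv _ _)) h1
    exact hs (by conv_lhs => rw [← this]
                 exact perm_app_inv _ _)
  have hsi : s (t⁻¹ p) = t⁻¹ p := by
    by_contra h1
    have := h (t⁻¹ p) h1 (by
      intro h2
      rw [perm_app_inv] at h2
      exact ht (by conv_lhs => rw [h2]
                   exact perm_app_inv _ _))
    exact ht (by conv_lhs => rw [← this]
                 exact perm_app_inv _ _)
  have e1 : (s * t * s⁻¹ * t⁻¹) (t p) = p := by
    simp only [Equiv.Perm.mul_apply, perm_inv_app, hti, perm_app_inv]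
  have e2 : (s * t * s⁻¹ * t⁻¹) p = s p := by
    have : s⁻¹ (t⁻¹ p) = t⁻¹ p := by rw [Equiv.Perm.inv_eq_iff_eq, hsi]
    simp only [Equiv.Perm.mul_apply, this, perm_app_inv]
  have e3 : (s * t * s⁻¹ * t⁻¹) (s p) = t p := by
    have : t⁻¹ (s p) = s p := by rw [Equiv.Perm.inv_eq_iff_eq, hts]
    simp only [Equiv.Perm.mul_apply, this, perm_inv_app, hst]
  rw [← card_support_eq_three_iff]
  have : (s * t * s⁻¹ * t⁻¹).support = {p, s p, t p} := by
    ext x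
    rw [Equiv.Perm.mem_support]
    simp only [Finset.mem_insert, Finset.mem_singleton]
    constructor
    · intro hx
      by_contra! hc
      obtain ⟨h1, h2, h3⟩ := hc
      apply hx
      by_cases htx : t x = x
      · have a1 : t⁻¹ x = x := by rw [Equiv.Perm.inv_eq_iff_eq, htx]
        have a2 : t (s⁻¹ x) = s⁻¹ x := by
          by_contra h4
          have h5 : s⁻¹ x ≠ p := by
            intro h6
            rw [Equiv.Perm.inv_eq_iff_eq] at h6
            exact h2 h6
          apply h5
          apply h _ _ h4
          intro h6
          rw [perm_app_inv] at h6
          rw [← h6] at h4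
          exact h4 htx
        simp only [Equiv.Perm.mul_apply, a1, a2, perm_app_inv]
      · have a1 : s x = x := by
          by_contra h4
          exact h1 (h x h4 htx)
        have a2 : s (t⁻¹ x) = t⁻¹ x := by
          by_contra h4
          have h5 : t⁻¹ x ≠ p := by
            intro h6
            rw [Equiv.Perm.inv_eq_iff_eq] at h6
            exact h3 h6
          apply h5
          apply h _ h4
          intro h6
          rw [perm_app_inv] at h6
          apply htx
          conv_lhs => rw [h6]
          exact perm_app_inv _ _
        have a3 : s⁻¹ (t⁻¹ x) = t⁻¹ x := by rw [Equiv.Perm.inv_eq_iff_eq, a2]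
        simp only [Equiv.Perm.mul_apply, a3, perm_app_inv, a1]
    · rintro (rfl | rfl | rfl)
      · rw [e2]; exact hs
      · rw [e3]; exact hne.symm
      · rw [e1]; exact ht.symm
  rw [this, Finset.card_eq_three]
  exact ⟨p, s p, t p, hs.symm, ht.symm, hne, rfl⟩

theorem threeCycle_facts {X : Type*} [Fintype X] [DecidableEq X] {a b c : X}
    (ab : a ≠ b) (ac : a ≠ c) (bc : b ≠ c) :
    ∃ s ∈ alternatingGroup X, s a ≠ a ∧ ∀ x, s x ≠ x → x = a ∨ x = b ∨ x = c := by
  refine ⟨Equiv.swap a b * Equiv.swap a c, ?_, ?_, ?_⟩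
  · exact (Equiv.Perm.isThreeCycle_swap_mul_swap_same ab ac bc).mem_alternatingGroup
  · rw [Equiv.Perm.mul_apply, Equiv.swap_apply_left, Equiv.swap_apply_of_ne_of_ne ac.symm bc.symm]
    exact ac.symm
  · intro x hx
    by_contra! hc
    apply hx
    rw [Equiv.Perm.mul_apply, Equiv.swap_apply_of_ne_of_ne hc.1 hc.2.2,
      Equiv.swap_apply_of_ne_of_ne hc.1 hc.2.1]

theorem exists_threeCycle {A : Type*} [Fintype A] [DecidableEq A] (z o : A) (hzo : z ≠ o)
    (M : ℕ) (hM : 4 ≤ M) (ih : alternatingGroup (Fin M → A) ≤ gateGroup A M) :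
    ∃ g ∈ gateGroup A (M + 1), g.IsThreeCycle := by
  have i0 : 0 < M := by omega
  have i1 : 1 < M := by omega
  have i2 : 2 < M := by omega
  obtain ⟨s, hs, hsa, hsx⟩ := threeCycle_facts (X := Fin M → A)
    (a := fun _ => z) (b := fun i => if i.val = 1 then o else z)
    (c := fun i => if i.val ≤ 1 then o else z)
    (fun h => hzo (by simpa using congrFun h ⟨1, i1⟩))
    (fun h => hzo (by simpa using congrFun h ⟨1, i1⟩))
    (fun h => hzo (by simpa using congrFun h ⟨0, i0⟩))
  obtain ⟨t, ht, hta, htx⟩ := threeCycle_facts (X := Fin M → A)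
    (a := fun _ => z) (b := fun i => if i.val = 1 then o else z)
    (c := fun i => if 1 ≤ i.val then o else z)
    (fun h => hzo (by simpa using congrFun h ⟨1, i1⟩))
    (fun h => hzo (by simpa using congrFun h ⟨1, i1⟩))
    (fun h => hzo (by simpa using congrFun h ⟨2, i2⟩))
  have hS := applyAlong_mem_gateGroup (Fin.castSuccEmb : Fin M ↪ Fin (M + 1)) (ih hs)
  have hT := applyAlong_mem_gateGroup (Fin.succEmb M) (ih ht)
  refine ⟨_, mul_mem (mul_mem (mul_mem hS hT) (inv_mem hS)) (inv_mem hT),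
    commutator_isThreeCycle _ _ (fun _ => z) ?_ ?_ ?_⟩
  · rw [applyAlong_ne_iff]; exact hsa
  · rw [applyAlong_ne_iff]; exact hta
  · intro x h1 h2
    rw [applyAlong_ne_iff] at h1 h2
    have k1 := hsx _ h1
    have k2 := htx _ h2
    have x1 : x ⟨1, by omega⟩ = z := by
      rcases k2 with k | k | k <;> simpa using congrFun k ⟨0, i0⟩
    have c1 : x ∘ (Fin.castSuccEmb : Fin M ↪ Fin (M + 1)) = fun _ => z := by
      rcases k1 with k | k | k
      · exact k
      · have := congrFun k ⟨1, i1⟩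
        simp at this
        exact absurd (x1.symm.trans this) hzo
      · have := congrFun k ⟨1, i1⟩
        simp at this
        exact absurd (x1.symm.trans this) hzo
    have x2 : x ⟨2, by omega⟩ = z := congrFun c1 ⟨2, i2⟩
    have c2 : x ∘ (Fin.succEmb M) = fun _ => z := by
      rcases k2 with k | k | k
      · exact k
      · have := congrFun k ⟨1, i1⟩
        simp at this
        exact absurd (x2.symm.trans this) hzo
      · have := congrFun k ⟨1, i1⟩
        simp at this
        exact absurd (x2.symm.trans this) hzo
    funext k
    refine Fin.cases ?_ (fun j => ?_) k
    · exact congrFun c1 ⟨0, i0⟩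
    · exact congrFun c2 j

theorem alternating_two {X : Type*} [Fintype X] [DecidableEq X] (hX : 4 ≤ Fintype.card X)
    {a b c d : X} (hab : a ≠ b) (hcd : c ≠ d) :
    ∃ s ∈ alternatingGroup X, s a = c ∧ s b = d := by
  have h1 := alternatingGroup.isMultiplyPretransitive X
  have h2 : MulAction.IsMultiplyPretransitive (alternatingGroup X) X 2 :=
    MulAction.isMultiplyPretransitive_of_le (n := Nat.card X - 2)
      (by rw [Nat.card_eq_fintype_card]; omega) (Nat.sub_le _ _)
  rw [MulAction.is_two_pretransitive_iff] at h2
  obtain ⟨g, hg⟩ := h2 hab hcd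
  exact ⟨g.1, g.2, hg⟩

/-- Fix all coordinates but `j`. -/
theorem move_pair {A : Type*} [Fintype A] [DecidableEq A] (hA : 1 < Fintype.card A)
    (M : ℕ) (hM : 4 ≤ M) (ih : alternatingGroup (Fin M → A) ≤ gateGroup A M)
    (j i : Fin (M + 1)) (hij : i ≠ j) (x y : Fin (M + 1) → A) (hxy : x i ≠ y i)
    (x' y' : Fin (M + 1) → A) (i' : Fin (M + 1)) (hij' : i' ≠ j) (hxy' : x' i' ≠ y' i') :
    ∃ g ∈ gateGroup A (M + 1), (∀ k, k ≠ j → g x k = x' k) ∧ (∀ k, k ≠ j → g y k = y' k) ∧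
      g x j = x j ∧ g y j = y j := by
  have hcard : 4 ≤ Fintype.card (Fin M → A) := by
    rw [Fintype.card_fun, Fintype.card_fin]
    calc 4 ≤ 2 ^ 4 := by norm_num
      _ ≤ 2 ^ M := Nat.pow_le_pow_right (by norm_num) hM
      _ ≤ _ := Nat.pow_le_pow_left hA M
  have key : ∀ (u v : Fin (M + 1) → A) (i : Fin (M + 1)), i ≠ j → u i ≠ v i →
      u ∘ (Fin.succAboveEmb j) ≠ v ∘ (Fin.succAboveEmb j) := by
    intro u v i hi huv h
    obtain ⟨l, rfl⟩ := Fin.exists_succAbove_eq hi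
    exact huv (congrFun h l)
  obtain ⟨s, hs, h1, h2⟩ := alternating_two hcard (key x y i hij hxy) (key x' y' i' hij' hxy')
  refine ⟨_, applyAlong_mem_gateGroup (Fin.succAboveEmb j) (ih hs), ?_, ?_, ?_, ?_⟩
  · intro k hk
    obtain ⟨l, rfl⟩ := Fin.exists_succAbove_eq hk
    exact (applyAlong_apply s _ x l).trans (congrFun h1 l)
  · intro k hk
    obtain ⟨l, rfl⟩ := Fin.exists_succAbove_eq hk
    exact (applyAlong_apply s _ y l).trans (congrFun h2 l)
  · apply applyAlong_of_notMem
    rintro ⟨l, hl⟩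
    exact Fin.succAbove_ne j l hl
  · apply applyAlong_of_notMem
    rintro ⟨l, hl⟩
    exact Fin.succAbove_ne j l hl

theorem to_const {A : Type*} [Fintype A] [DecidableEq A] (hA : 1 < Fintype.card A)
    (z o : A) (hzo : z ≠ o)
    (M : ℕ) (hM : 4 ≤ M) (ih : alternatingGroup (Fin M → A) ≤ gateGroup A M)
    (x y : Fin (M + 1) → A) (hxy : x ≠ y) :
    ∃ g ∈ gateGroup A (M + 1), g x = (fun _ => z) ∧ g y = (fun _ => o) := by
  obtain ⟨i, hi⟩ := Function.ne_iff.mp hxy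
  have : Nontrivial (Fin (M + 1)) := Fin.nontrivial_iff_two_le.mpr (by omega)
  obtain ⟨j, hj⟩ := exists_ne i
  obtain ⟨g, hg, g1, g2, -, -⟩ := move_pair hA M hM ih j i hj.symm x y hi
    (fun _ => z) (fun _ => o) i hj.symm hzo
  -- the second move leaves out `i`; a third coordinate keeps the two words apart
  obtain ⟨k, hki, hkj⟩ : ∃ k : Fin (M + 1), k ≠ i ∧ k ≠ j := by
    have : ∃ k, k ∉ ({i, j} : Finset (Fin (M + 1))) := by
      by_contra! hall
      have h1 : (Finset.univ : Finset (Fin (M + 1))) ⊆ {i, j} := fun k _ => hall k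
      have h2 := (Finset.card_le_card h1).trans Finset.card_le_two
      simp at h2
      omega
    obtain ⟨k, hk⟩ := this
    exact ⟨k, by simpa using hk⟩
  obtain ⟨h, hh, h1, h2, h3, h4⟩ := move_pair hA M hM ih i k hki (g x) (g y)
    (by rw [g1 k hkj, g2 k hkj]; exact hzo) (fun _ => z) (fun _ => o) k hki hzo
  refine ⟨h * g, mul_mem hh hg, ?_, ?_⟩
  · funext l
    by_cases hl : l = i
    · subst hl
      exact h3.trans (g1 _ hj.symm)
    · exact h1 l hl
  · funext l
    by_cases hl : l = i
    · subst hl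
      exact h4.trans (g2 _ hj.symm)
    · exact h2 l hl

theorem alternating_le_gateGroup {A : Type*} [Fintype A] [DecidableEq A]
    (hA : 1 < Fintype.card A) (N : ℕ) (hN : 4 ≤ N) :
    alternatingGroup (Fin N → A) ≤ gateGroup A N := by
  induction N, hN using Nat.le_induction with
  | base =>
    intro g _
    refine Subgroup.subset_closure ⟨g, Function.Embedding.refl _, ?_⟩
    ext x k
    exact (applyAlong_apply g (Function.Embedding.refl _) x k).symm
  | succ M hM ih =>
    obtain ⟨z, o, hzo⟩ := Fintype.one_lt_card_iff.mp hA
    obtain ⟨g, hg, hg3⟩ := exists_threeCycle z o hzo M hM ih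
    refine Equiv.Perm.alternatingGroup_le_of_isPreprimitive_of_isThreeCycle_mem ?_ hg3 hg
    apply MulAction.isPreprimitive_of_is_two_pretransitive
    rw [MulAction.is_two_pretransitive_iff]
    intro a b c d hab hcd
    obtain ⟨u, hu, u1, u2⟩ := to_const hA z o hzo M hM ih a b hab
    obtain ⟨v, hv, v1, v2⟩ := to_const hA z o hzo M hM ih c d hcd
    refine ⟨⟨v⁻¹ * u, mul_mem (inv_mem hv) hu⟩, ?_, ?_⟩
    · change v⁻¹ (u a) = c
      rw [u1, ← v1, perm_inv_app]
    · change v⁻¹ (u b) = d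
      rw [u2, ← v2, perm_inv_app]

/-- Splitting a word into the selected coordinates and the others. -/
noncomputable def splitWord (A : Type*) {m n : ℕ} (ι : Fin m ↪ Fin n) :
    (Fin n → A) ≃ (Fin m → A) × ({k : Fin n // ¬ ∃ j, ι j = k} → A) where
  toFun x := (x ∘ ι, fun k => x k.1)
  invFun p := fun k => if h : ∃ j, ι j = k then p.1 h.choose else p.2 ⟨k, h⟩
  left_inv x := by
    funext k
    by_cases h : ∃ j, ι j = k
    · simp only [dif_pos h, Function.comp_apply, h.choose_spec]
    · simp only [dif_neg h]
  right_inv p := by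
    refine Prod.ext ?_ ?_
    · funext j
      have h : ∃ j', ι j' = ι j := ⟨j, rfl⟩
      simp only [Function.comp_apply, dif_pos h]
      apply congrArg p.1
      exact ι.injective h.choose_spec
    · funext k
      simp only [dif_neg k.2]

theorem sign_applyAlong {A : Type*} [Fintype A] [DecidableEq A] {m n : ℕ}
    (f : Equiv.Perm (Fin m → A)) (ι : Fin m ↪ Fin n) :
    Equiv.Perm.sign (applyAlong f ι) =
      Equiv.Perm.sign f ^ (Fintype.card A ^ Fintype.card {k : Fin n // ¬ ∃ j, ι j = k}) := by
  rw [← Equiv.Perm.sign_permCongr (splitWord A ι)]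
  have : (splitWord A ι).permCongr (applyAlong f ι) = Equiv.prodCongrLeft (fun _ => f) := by
    ext1 p
    obtain ⟨x, rfl⟩ := (splitWord A ι).surjective p
    rw [Equiv.permCongr_apply, Equiv.symm_apply_apply]
    refine Prod.ext ?_ ?_
    · exact applyAlong_comp f ι x
    · funext k
      exact applyAlong_of_notMem f ι x k.1 k.2
  rw [this, Equiv.Perm.sign_prodCongrLeft, Finset.prod_const, Finset.card_univ, Fintype.card_fun]

/-- **One borrowed symbol suffices** (Corollary 12 of the paper).
Let `A` be a finite type with at least two elements, `n ≥ 3` and `f` any permutation of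
`Fin n → A`.  The permutation `f ⊕ id₁` of `Fin (n+1) → A` — acting as `f` on the first
`n` coordinates and fixing the last coordinate — lies in the subgroup of
`Perm (Fin (n+1) → A)` generated by the applications, along injections
`ι : Fin 4 ↪ Fin (n+1)`, of permutations of `Fin 4 → A`.  That is, every permutation of
`Aⁿ` can be computed with one borrowed symbol by a circuit built from 4-ary gates. -/
theorem borrowed_symbol_fourAry_gates
    {A : Type*} [Fintype A] [DecidableEq A] (hA : 1 < Fintype.card A)
    (n : ℕ) (hn : 3 ≤ n) (f : Equiv.Perm (Fin n → A)) :
    applyAlong f Fin.castSuccEmb ∈ Subgroup.closure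
      {σ : Equiv.Perm (Fin (n + 1) → A) |
        ∃ (g : Equiv.Perm (Fin 4 → A)) (ι : Fin 4 ↪ Fin (n + 1)),
          σ = applyAlong g ι} := by
  change _ ∈ gateGroup A (n + 1)
  have hG := alternating_le_gateGroup hA (n + 1) (by omega)
  rcases Int.units_eq_one_or (Equiv.Perm.sign (applyAlong f Fin.castSuccEmb)) with h | h
  · exact hG (Equiv.Perm.mem_alternatingGroup.mpr h)
  · -- the alphabet has odd size, so an odd gate of arity 4 stays odd
    have hodd : Odd (Fintype.card A) := by
      rw [sign_applyAlong] at h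
      by_contra hne
      rw [Nat.not_odd_iff_even] at hne
      have hpos : Fintype.card {k : Fin (n + 1) //
          ¬ ∃ j, (Fin.castSuccEmb : Fin n ↪ Fin (n + 1)) j = k} ≠ 0 := by
        have : Nonempty {k : Fin (n + 1) //
            ¬ ∃ j, (Fin.castSuccEmb : Fin n ↪ Fin (n + 1)) j = k} :=
          ⟨⟨Fin.last n, fun ⟨j, hj⟩ => (Fin.castSucc_lt_last j).ne hj⟩⟩
        exact Fintype.card_ne_zero
      have hev := (Nat.even_pow' hpos).mpr hne
      rcases Int.units_eq_one_or (Equiv.Perm.sign f) with hf | hf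
      · rw [hf, one_pow] at h
        exact absurd h (by decide)
      · rw [hf, hev.neg_one_pow] at h
        exact absurd h (by decide)
    obtain ⟨z, o, hzo⟩ := Fintype.one_lt_card_iff.mp hA
    have hw : (fun _ : Fin 4 => z) ≠ (fun _ => o) := fun h => hzo (congrFun h 0)
    let ι : Fin 4 ↪ Fin (n + 1) := (Fin.castLEEmb (by omega : 4 ≤ n + 1))
    let w : Equiv.Perm (Fin (n + 1) → A) := applyAlong (Equiv.swap (fun _ => z) (fun _ => o)) ι
    have hwG : w ∈ gateGroup A (n + 1) := Subgroup.subset_closure ⟨_, ι, rfl⟩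
    have hws : Equiv.Perm.sign w = -1 := by
      rw [sign_applyAlong, Equiv.Perm.sign_swap hw, (hodd.pow).neg_one_pow]
    have hm : applyAlong f Fin.castSuccEmb * w ∈ gateGroup A (n + 1) := by
      apply hG
      rw [Equiv.Perm.mem_alternatingGroup, Equiv.Perm.sign_mul, h, hws]
      decide
    exact (Subgroup.mul_mem_cancel_right _ hwG).mp hm
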